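/- An N-point configuration X_N on the unit sphere S^d (d ≥ 2) has minimal spherical cap L2-discrepancy among all N-point configurations on S^d if and only if X_N has maximal sum of pairwise Euclidean distances among all N-point configurations on S^d. -/

import Mathlib

open MeasureTheory Metric Real Filter
open scoped BigOperators ENNReal NNReal RealInnerProductSpace Topology

noncomputable section

/-- Normalized uniform (surface) probability measure `σ_d` on the unit sphere
`S^d ⊂ ℝ^{d+1}`, defined as normalized `d`-dimensional Hausdorff measure. -/
def sigmaMeasure (d : ℕ) : Measure (EuclideanSpace ℝ (Fin (d + 1))) :=
  (μH[(d : ℝ)] (sphere (0 : EuclideanSpace ℝ (Fin (d + 1))) 1))⁻¹ •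
    μH[(d : ℝ)].restrict (sphere (0 : EuclideanSpace ℝ (Fin (d + 1))) 1)

/-- Squared spherical cap `L²` discrepancy of the `N`-point configuration `x` on `S^d`:
`∫_{-1}^{1} ∫_{S^d} |#{k : x_k ∈ C(y;t)}/N − σ_d(C(y;t))|² dσ_d(y) dt`. -/
def L2DiscSq (d N : ℕ) (x : Fin N → EuclideanSpace ℝ (Fin (d + 1))) : ℝ :=
  ∫ t in Set.Icc (-1 : ℝ) 1, ∫ y,
    ((Nat.card {k : Fin N // t ≤ ⟪y, x k⟫} : ℝ) / N
      - (sigmaMeasure d {z | t ≤ ⟪y, z⟫}).toReal) ^ 2 ∂ sigmaMeasure d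

/-- Spherical cap `L²` discrepancy. -/
def L2Disc (d N : ℕ) (x : Fin N → EuclideanSpace ℝ (Fin (d + 1))) : ℝ :=
  Real.sqrt (L2DiscSq d N x)

/-!
Let `z ∼ μ`, `w ∼ ν` be independent unit vectors. By the layer cake formula, integrating
`μ(C(y; t)) * ν(C(y; t))` over the height `t` and the centre `y` gives one plus the mean of
`min ⟪z, y⟫ ⟪w, y⟫ = (⟪z + w, y⟫ - |⟪w - z, y⟫|) / 2`. By rotation invariance the first term has
mean zero and the second has mean `c * dist z w`, with `c > 0` the mean of `|⟪u, y⟫|` for a unit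
vector `u`. Expanding the square and using that the mean distance from a unit vector to a uniform
point is constant yields Stolarsky's invariance principle: the squared cap discrepancy of `μ` is
`c / 2` times the mean distance under `σ` minus the mean distance under `μ`.
-/

lemma hausdorffMeasure_image_lt_top_of_contDiff {F G : Type*} [NormedAddCommGroup F]
    [NormedSpace ℝ F] [FiniteDimensional ℝ F] [NormedAddCommGroup G] [NormedSpace ℝ G]
    [MeasurableSpace G] [BorelSpace G] {f : F → G} (hf : ContDiff ℝ 1 f) {K : Set F}
    (hK : IsCompact K) : μH[Module.finrank ℝ F] (f '' K) < ⊤ := by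
  borelize F
  have := isAddHaarMeasure_hausdorffMeasure (E := F)
  obtain ⟨R, hKR⟩ := hK.isBounded.subset_closedBall 0
  obtain ⟨L, hL⟩ := hf.contDiffOn.exists_lipschitzOnWith one_ne_zero (convex_closedBall (0 : F) R)
    (isCompact_closedBall 0 R)
  refine ((hL.mono hKR).hausdorffMeasure_image_le (by positivity)).trans_lt ?_
  exact ENNReal.mul_lt_top (by finiteness) hK.measure_lt_top

section SphereHausdorff

variable {E : Type*} [NormedAddCommGroup E] [InnerProductSpace ℝ E]

lemma ball_subset_image_orthogonalProjectionOnto_sphere {v : E} (hv : ‖v‖ = 1) :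
    ball 0 1 ⊆ (ℝ ∙ v)ᗮ.orthogonalProjectionOnto '' sphere (0 : E) 1 := by
  intro w hw
  have hw : ‖w‖ ^ 2 < 1 := by simpa using hw
  have horth : ⟪(w : E), √(1 - ‖w‖ ^ 2) • v⟫ = 0 := by
    rw [inner_smul_right, Submodule.mem_orthogonal_singleton_iff_inner_left.1 w.2, mul_zero]
  refine ⟨w + √(1 - ‖w‖ ^ 2) • v, ?_, by simp⟩
  rw [mem_sphere_zero_iff_norm, ← sq_eq_sq₀ (norm_nonneg _) zero_le_one, sq,
    norm_add_sq_eq_norm_sq_add_norm_sq_real horth, norm_smul, hv, mul_one,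
    norm_of_nonneg (sqrt_nonneg _), mul_self_sqrt (by linarith), Submodule.coe_norm]
  ring

open NormedSpace in
lemma cap_subset_image_normalize_add {v : E} (hv : ‖v‖ = 1) :
    {y | 1 / 2 < ⟪v, y⟫} ∩ sphere (0 : E) 1 ⊆
      (fun w : (ℝ ∙ v)ᗮ => normalize (v + w)) '' closedBall 0 3 := by
  rintro y ⟨hvy : 1 / 2 < ⟪v, y⟫, hy⟩
  rw [mem_sphere_zero_iff_norm] at hy
  have hpos : 0 < ⟪v, y⟫ := by linarith
  have hinv : ⟪v, y⟫⁻¹ ≤ 2 := inv_le_of_inv_le₀ (by norm_num) (by linarith)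
  have horth : ⟪v, y⟫⁻¹ • y - v ∈ (ℝ ∙ v)ᗮ := by
    rw [Submodule.mem_orthogonal_singleton_iff_inner_right, inner_sub_right, inner_smul_right,
      real_inner_self_eq_norm_sq, hv, inv_mul_cancel₀ hpos.ne']
    norm_num
  refine ⟨⟨_, horth⟩, ?_, ?_⟩
  · rw [mem_closedBall_zero_iff, Submodule.coe_norm]
    calc ‖⟪v, y⟫⁻¹ • y - v‖ ≤ ‖⟪v, y⟫⁻¹ • y‖ + ‖v‖ := norm_sub_le _ _
      _ = ⟪v, y⟫⁻¹ + 1 := by rw [norm_smul, hy, hv, mul_one, norm_inv, norm_of_nonneg hpos.le]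
      _ ≤ 3 := by linarith
  · simp only [add_sub_cancel]
    rw [normalize_smul_of_pos (inv_pos.2 hpos), normalize_eq_self_of_norm_eq_one hy]

open NormedSpace in
lemma contDiff_normalize_add_orthogonal {v : E} (hv : v ≠ 0) {n : WithTop ℕ∞} :
    ContDiff ℝ n (fun w : (ℝ ∙ v)ᗮ => normalize (v + w)) := by
  have hadd : ContDiff ℝ n (fun w : (ℝ ∙ v)ᗮ => v + (w : E)) :=
    contDiff_const.add (ℝ ∙ v)ᗮ.subtypeL.contDiff
  have hne (w : (ℝ ∙ v)ᗮ) : v + (w : E) ≠ 0 := fun h => hv <| by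
    have hin := congrArg (⟪v, ·⟫) h
    simpa [inner_add_right, Submodule.mem_orthogonal_singleton_iff_inner_right.1 w.2] using hin
  exact ((hadd.norm ℝ hne).inv fun w => norm_ne_zero_iff.2 (hne w)).smul hadd

variable [MeasurableSpace E] [BorelSpace E]

lemma hausdorffMeasure_sphere_pos {d : ℕ} (hE : Module.finrank ℝ E = d + 1) :
    0 < μH[d] (sphere (0 : E) 1) := by
  have : Fact (Module.finrank ℝ E = d + 1) := ⟨hE⟩
  have : FiniteDimensional ℝ E := .of_fact_finrank_eq_succ d
  have : Nontrivial E := Module.nontrivial_of_finrank_eq_succ hE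
  obtain ⟨v, hv⟩ := exists_norm_eq E zero_le_one
  have hrank : Module.finrank ℝ (ℝ ∙ v)ᗮ = d :=
    Submodule.finrank_orthogonal_span_singleton (norm_ne_zero_iff.1 (by simp [hv]))
  have : (μH[d] : Measure (ℝ ∙ v)ᗮ).IsAddHaarMeasure := by
    simpa only [hrank] using isAddHaarMeasure_hausdorffMeasure (E := (ℝ ∙ v)ᗮ)
  calc 0 < μH[d] (ball (0 : (ℝ ∙ v)ᗮ) 1) := measure_ball_pos _ _ one_pos
    _ ≤ μH[d] ((ℝ ∙ v)ᗮ.orthogonalProjectionOnto '' sphere (0 : E) 1) :=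
      measure_mono (ball_subset_image_orthogonalProjectionOnto_sphere hv)
    _ ≤ μH[d] (sphere (0 : E) 1) :=
      hausdorffMeasure_orthogonalProjectionOnto_le _ _ _ (by positivity)

lemma hausdorffMeasure_sphere_lt_top {d : ℕ} (hE : Module.finrank ℝ E = d + 1) :
    μH[d] (sphere (0 : E) 1) < ⊤ := by
  have : Fact (Module.finrank ℝ E = d + 1) := ⟨hE⟩
  have : FiniteDimensional ℝ E := .of_fact_finrank_eq_succ d
  refine (isCompact_sphere 0 1).measure_lt_top_of_nhdsWithin fun v hv => ?_
  rw [mem_sphere_zero_iff_norm] at hv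
  have hv0 : v ≠ 0 := norm_ne_zero_iff.1 (by simp [hv])
  have hmem : 1 / 2 < ⟪v, v⟫ := by
    rw [real_inner_self_eq_norm_sq, hv]
    norm_num
  have hcap : {y | 1 / 2 < ⟪v, y⟫} ∈ 𝓝 v :=
    (isOpen_lt continuous_const (by fun_prop)).mem_nhds hmem
  have hrank : Module.finrank ℝ (ℝ ∙ v)ᗮ = d := Submodule.finrank_orthogonal_span_singleton hv0
  have himage := hausdorffMeasure_image_lt_top_of_contDiff
    (contDiff_normalize_add_orthogonal hv0) (isCompact_closedBall 0 3)
  rw [hrank] at himage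
  exact ⟨_, inter_mem (mem_nhdsWithin_of_mem_nhds hcap) self_mem_nhdsWithin,
    (measure_mono (cap_subset_image_normalize_add hv)).trans_lt himage⟩

end SphereHausdorff

section UniformOnSphere

variable {E : Type*} [NormedAddCommGroup E] [InnerProductSpace ℝ E] [MeasurableSpace E]

/-- `σ` is a rotation-invariant probability measure concentrated on the unit sphere of `E`, as a
measure on the ambient space `E`. -/
class IsUniformOnSphere (σ : Measure E) : Prop extends IsProbabilityMeasure σ where
  ae_norm_eq_one : ∀ᵐ y ∂σ, ‖y‖ = 1
  measurePreserving (e : E ≃ₗᵢ[ℝ] E) : MeasurePreserving e σ σ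

/-- The mean of `|⟪y, z⟫|` over independent `σ`-distributed `y` and `z`, which is the
proportionality constant in Stolarsky's invariance principle. -/
def meanAbsInner (σ : Measure E) : ℝ := ∫ z, ∫ y, |⟪z, y⟫| ∂σ ∂σ

instance isUniformOnSphere_sigmaMeasure (d : ℕ) : IsUniformOnSphere (sigmaMeasure d) where
  measure_univ := by
    have hE : Module.finrank ℝ (EuclideanSpace ℝ (Fin (d + 1))) = d + 1 :=
      finrank_euclideanSpace_fin
    rw [sigmaMeasure, Measure.smul_apply, Measure.restrict_apply_univ, smul_eq_mul]
    exact ENNReal.inv_mul_cancel (hausdorffMeasure_sphere_pos hE).ne'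
      (hausdorffMeasure_sphere_lt_top hE).ne
  ae_norm_eq_one := by
    refine Measure.ae_smul_measure ?_ _
    filter_upwards [ae_restrict_mem isClosed_sphere.measurableSet] with y hy
    rwa [mem_sphere_zero_iff_norm] at hy
  measurePreserving e := by
    have hpre : e.toIsometryEquiv ⁻¹' sphere 0 1 = sphere 0 1 := by
      ext y
      simp
    have hH := (e.toIsometryEquiv.measurePreserving_hausdorffMeasure (d : ℝ)).restrict_preimage
      (s := sphere 0 1) isClosed_sphere.measurableSet
    rw [hpre] at hH
    exact hH.smul_measure _

variable {σ : Measure E} [IsUniformOnSphere σ]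

lemma ae_abs_inner_le_norm (v : E) : ∀ᵐ y ∂σ, |⟪v, y⟫| ≤ ‖v‖ := by
  filter_upwards [IsUniformOnSphere.ae_norm_eq_one] with y hy
  simpa [hy] using abs_real_inner_le_norm v y

variable [BorelSpace E]

lemma integral_isometryInvariant_eq_of_norm_eq {G : Type*} [NormedAddCommGroup G] [NormedSpace ℝ G]
    {k : E → E → G} (hk : ∀ (e : E ≃ₗᵢ[ℝ] E) v y, k (e v) (e y) = k v y) {v w : E}
    (hvw : ‖v‖ = ‖w‖) : ∫ y, k v y ∂σ = ∫ y, k w y ∂σ := by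
  obtain ⟨e, rfl⟩ : ∃ e : E ≃ₗᵢ[ℝ] E, e v = w := ⟨_, Submodule.reflection_sub hvw⟩
  rw [← (IsUniformOnSphere.measurePreserving e).integral_comp
    e.toHomeomorph.measurableEmbedding (k (e v))]
  simp only [hk]

lemma integral_inner_eq_zero (v : E) : ∫ y, ⟪v, y⟫ ∂σ = 0 := by
  have hodd : ∫ y, ⟪v, y⟫ ∂σ = ∫ y, ⟪-v, y⟫ ∂σ :=
    integral_isometryInvariant_eq_of_norm_eq (k := fun v y => ⟪v, y⟫)
      (fun e => e.inner_map_map) (norm_neg v).symm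
  simp only [inner_neg_left, integral_neg] at hodd
  linarith

lemma integral_abs_inner (v : E) : ∫ y, |⟪v, y⟫| ∂σ = meanAbsInner σ * ‖v‖ := by
  have hscale : ∀ᵐ z ∂σ, ∫ y, |⟪v, y⟫| ∂σ = (∫ y, |⟪z, y⟫| ∂σ) * ‖v‖ := by
    filter_upwards [IsUniformOnSphere.ae_norm_eq_one] with z hz
    have hnorm : ‖v‖ = ‖‖v‖ • z‖ := by rw [norm_smul, hz, norm_norm, mul_one]
    rw [integral_isometryInvariant_eq_of_norm_eq (k := fun v y => |⟪v, y⟫|)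
      (fun e v y => by rw [e.inner_map_map]) hnorm]
    simp only [real_inner_smul_left, abs_mul, abs_norm]
    rw [integral_const_mul, mul_comm]
  have hmean := integral_congr_ae hscale
  rwa [integral_const, probReal_univ, one_smul, integral_mul_const] at hmean

lemma integrable_inner (v : E) : Integrable (fun y => ⟪v, y⟫) σ :=
  .of_bound (by fun_prop) ‖v‖ (ae_abs_inner_le_norm v)

lemma meanAbsInner_pos [FiniteDimensional ℝ E] : 0 < meanAbsInner σ := by
  have hnonneg : 0 ≤ meanAbsInner σ :=
    integral_nonneg fun _ => integral_nonneg fun _ => abs_nonneg _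
  refine hnonneg.lt_of_ne' fun hzero => ?_
  have horth (v : E) : ∀ᵐ y ∂σ, ⟪v, y⟫ = 0 := by
    have hmean := integral_abs_inner (σ := σ) v
    rw [hzero, zero_mul, integral_eq_zero_iff_of_nonneg (fun _ => abs_nonneg _)
      (integrable_inner v).abs] at hmean
    filter_upwards [hmean] with y hy using abs_eq_zero.1 hy
  have hall := ae_all_iff.2 fun i => horth (stdOrthonormalBasis ℝ E i)
  obtain ⟨y, hy, hy1⟩ := (hall.and IsUniformOnSphere.ae_norm_eq_one).exists
  have : y = 0 := InnerProductSpace.ext_inner_left_basis (𝕜 := ℝ)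
    (stdOrthonormalBasis ℝ E).toBasis (by simpa using hy)
  simp [this] at hy1

end UniformOnSphere

lemma setIntegral_Icc_measureReal_le {Ω : Type*} [MeasurableSpace Ω] {P : Measure Ω}
    [IsProbabilityMeasure P] {f : Ω → ℝ} (hf : AEMeasurable f P) {a b : ℝ}
    (hab : ∀ᵐ ω ∂P, f ω ∈ Set.Icc a b) :
    ∫ t in Set.Icc a b, P.real {ω | t ≤ f ω} = (∫ ω, f ω ∂P) - a := by
  obtain ⟨ω₀, hω₀⟩ := hab.exists
  have hle : a ≤ b := hω₀.1.trans hω₀.2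
  have hfint : Integrable f P := .of_mem_Icc a b hf hab
  have hlayer : ∫ ω, (f ω - a) ∂P = ∫ t in Set.Ioc 0 (b - a), P.real {ω | t ≤ f ω - a} :=
    (hfint.sub (integrable_const a)).integral_eq_integral_Ioc_meas_le
      (hab.mono fun ω h => sub_nonneg.2 h.1) (hab.mono fun ω h => sub_le_sub_right h.2 a)
  calc ∫ t in Set.Icc a b, P.real {ω | t ≤ f ω}
      = ∫ t in a..b, P.real {ω | t - a ≤ f ω - a} := by
        simp only [sub_le_sub_iff_right, intervalIntegral.integral_of_le hle,
          integral_Icc_eq_integral_Ioc]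
    _ = ∫ t in Set.Ioc 0 (b - a), P.real {ω | t ≤ f ω - a} := by
        rw [intervalIntegral.integral_comp_sub_right (fun t => P.real {ω | t ≤ f ω - a}), sub_self,
          intervalIntegral.integral_of_le (sub_nonneg.2 hle)]
    _ = (∫ ω, f ω ∂P) - a := by
        rw [← hlayer, integral_sub hfint (integrable_const a), integral_const, probReal_univ,
          one_smul]

section Stolarsky

variable {E : Type*} [NormedAddCommGroup E] [InnerProductSpace ℝ E] [MeasurableSpace E]

/-- The spherical cap `C(y; t)`, encoded as the half-space of `E` that cuts it out of the sphere:
the measures applied to it are concentrated on the sphere. -/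
def sphericalCap (y : E) (t : ℝ) : Set E := {z | t ≤ ⟪y, z⟫}

/-- The squared spherical cap `L²`-discrepancy of `μ` from `σ`. -/
def capL2DiscSq (σ μ : Measure E) : ℝ :=
  ∫ t in Set.Icc (-1 : ℝ) 1, ∫ y, (μ.real (sphericalCap y t) - σ.real (sphericalCap y t)) ^ 2 ∂σ

/-- The mean distance between independent points distributed according to `μ` and `ν`. -/
def meanDist (μ ν : Measure E) : ℝ := ∫ z, ∫ w, dist z w ∂ν ∂μ

section Fubini

variable {σ μ ν : Measure E}

lemma ae_prod_min_inner_mem_Icc (hσ : ∀ᵐ y ∂σ, ‖y‖ = 1) (hμ : ∀ᵐ z ∂μ, ‖z‖ = 1)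
    (hν : ∀ᵐ w ∂ν, ‖w‖ = 1) :
    ∀ᵐ p ∂σ.prod (μ.prod ν), min ⟪p.2.1, p.1⟫ ⟪p.2.2, p.1⟫ ∈ Set.Icc (-1 : ℝ) 1 := by
  have hσ' := Measure.quasiMeasurePreserving_fst (ν := μ.prod ν) |>.ae hσ
  have hμ' := Measure.quasiMeasurePreserving_snd (μ := σ) |>.ae
    (Measure.quasiMeasurePreserving_fst (ν := ν) |>.ae hμ)
  have hν' := Measure.quasiMeasurePreserving_snd (μ := σ) |>.ae
    (Measure.quasiMeasurePreserving_snd (μ := μ) |>.ae hν)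
  filter_upwards [hσ', hμ', hν'] with p hy hz hw
  have hzy := abs_le.1 (abs_real_inner_le_norm p.2.1 p.1)
  have hwy := abs_le.1 (abs_real_inner_le_norm p.2.2 p.1)
  rw [hz, hy, one_mul] at hzy
  rw [hw, hy, one_mul] at hwy
  exact ⟨le_min hzy.1 hwy.1, min_le_of_left_le hzy.2⟩

variable [BorelSpace E] [FiniteDimensional ℝ E]

lemma measurable_measureReal_sphericalCap [SFinite μ] :
    Measurable fun p : ℝ × E => μ.real (sphericalCap p.2 p.1) := by
  have hcap : MeasurableSet {q : (ℝ × E) × E | q.1.1 ≤ ⟪q.1.2, q.2⟫} :=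
    measurableSet_le (by fun_prop) (by fun_prop)
  exact (measurable_measure_prodMk_left hcap).ennreal_toReal

variable [IsFiniteMeasure μ] [IsFiniteMeasure ν]

lemma integrable_measureReal_sphericalCap_mul [IsFiniteMeasure σ] :
    Integrable (fun p : ℝ × E => μ.real (sphericalCap p.2 p.1) * ν.real (sphericalCap p.2 p.1))
      ((volume.restrict (Set.Icc (-1) 1)).prod σ) := by
  refine .of_mem_Icc 0 (μ.real Set.univ * ν.real Set.univ) (measurable_measureReal_sphericalCap.mul
    measurable_measureReal_sphericalCap).aemeasurable (.of_forall fun p => ⟨by positivity, ?_⟩)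
  exact mul_le_mul (measureReal_mono (Set.subset_univ _)) (measureReal_mono (Set.subset_univ _))
    measureReal_nonneg measureReal_nonneg

lemma integral_measureReal_sphericalCap_mul (t : ℝ) :
    ∫ y, μ.real (sphericalCap y t) * ν.real (sphericalCap y t) ∂σ =
      (σ.prod (μ.prod ν)).real {p | t ≤ min ⟪p.2.1, p.1⟫ ⟪p.2.2, p.1⟫} := by
  have hcap : MeasurableSet {p : E × E × E | t ≤ min ⟪p.2.1, p.1⟫ ⟪p.2.2, p.1⟫} :=
    measurableSet_le measurable_const (by fun_prop)
  have hsection (y : E) : Prod.mk y ⁻¹' {p : E × E × E | t ≤ min ⟪p.2.1, p.1⟫ ⟪p.2.2, p.1⟫} =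
      sphericalCap y t ×ˢ sphericalCap y t := by
    ext p
    simp [sphericalCap, real_inner_comm]
  rw [measureReal_def, Measure.prod_apply hcap, ← integral_toReal
    (measurable_measure_prodMk_left hcap).aemeasurable (.of_forall fun y => measure_lt_top _ _)]
  simp only [hsection, ← measureReal_def, measureReal_prod_prod]

lemma integral_prod_dist (hμ : ∀ᵐ z ∂μ, ‖z‖ = 1) (hν : ∀ᵐ w ∂ν, ‖w‖ = 1) :
    ∫ p, dist p.1 p.2 ∂μ.prod ν = meanDist μ ν := by
  refine integral_prod _ (.of_bound (by fun_prop) 2 ?_)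
  filter_upwards [Measure.quasiMeasurePreserving_fst.ae hμ,
    Measure.quasiMeasurePreserving_snd.ae hν] with p hz hw
  rw [norm_of_nonneg dist_nonneg]
  linarith [dist_le_norm_add_norm p.1 p.2]

end Fubini

variable [BorelSpace E] {σ : Measure E} [IsUniformOnSphere σ]

lemma integral_min_inner (z w : E) :
    ∫ y, min ⟪z, y⟫ ⟪w, y⟫ ∂σ = -(meanAbsInner σ / 2 * dist z w) := by
  have hmin (y : E) : min ⟪z, y⟫ ⟪w, y⟫ = 2⁻¹ * (⟪z + w, y⟫ - |⟪w - z, y⟫|) := by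
    rw [inner_add_left, inner_sub_left]
    exact inf_eq_half_smul_add_sub_abs_sub' ℝ _ _
  simp only [hmin]
  rw [integral_const_mul, integral_sub (integrable_inner _) (integrable_inner _).abs,
    integral_inner_eq_zero, integral_abs_inner, dist_comm, dist_eq_norm]
  ring

variable {μ ν : Measure E} [IsProbabilityMeasure μ] [IsProbabilityMeasure ν]

lemma meanDist_uniform_right_eq (hμ : ∀ᵐ z ∂μ, ‖z‖ = 1) : meanDist μ σ = meanDist σ σ := by
  have hconst : ∀ᵐ z ∂σ, ∫ w, dist z w ∂σ = meanDist μ σ := by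
    filter_upwards [IsUniformOnSphere.ae_norm_eq_one] with z hz
    have hz' : ∀ᵐ z' ∂μ, ∫ w, dist z' w ∂σ = ∫ w, dist z w ∂σ := by
      filter_upwards [hμ] with z' hz'
      exact integral_isometryInvariant_eq_of_norm_eq (fun e => e.dist_map) (hz'.trans hz.symm)
    rw [meanDist, integral_congr_ae hz', integral_const, probReal_univ, one_smul]
  rw [meanDist.eq_def σ, integral_congr_ae hconst, integral_const, probReal_univ, one_smul]

variable [FiniteDimensional ℝ E]

lemma integral_prod_measureReal_sphericalCap_mul (hμ : ∀ᵐ z ∂μ, ‖z‖ = 1)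
    (hν : ∀ᵐ z ∂ν, ‖z‖ = 1) :
    ∫ p : ℝ × E, μ.real (sphericalCap p.2 p.1) * ν.real (sphericalCap p.2 p.1)
      ∂(volume.restrict (Set.Icc (-1) 1)).prod σ = 1 - meanAbsInner σ / 2 * meanDist μ ν := by
  have hmeas : AEMeasurable (fun p : E × E × E => min ⟪p.2.1, p.1⟫ ⟪p.2.2, p.1⟫)
      (σ.prod (μ.prod ν)) := by fun_prop
  have hmem := ae_prod_min_inner_mem_Icc (IsUniformOnSphere.ae_norm_eq_one (σ := σ)) hμ hν
  rw [integral_prod _ integrable_measureReal_sphericalCap_mul]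
  simp only [integral_measureReal_sphericalCap_mul]
  rw [setIntegral_Icc_measureReal_le hmeas hmem,
    integral_prod_symm _ (.of_mem_Icc (-1) 1 hmeas hmem)]
  simp only [integral_min_inner]
  rw [integral_neg, integral_const_mul, integral_prod_dist hμ hν]
  ring

theorem capL2DiscSq_eq_meanDist_sub (hμ : ∀ᵐ z ∂μ, ‖z‖ = 1) :
    capL2DiscSq σ μ = meanAbsInner σ / 2 * (meanDist σ σ - meanDist μ μ) := by
  have hσ : ∀ᵐ y ∂σ, ‖y‖ = 1 := IsUniformOnSphere.ae_norm_eq_one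
  let T : Measure ℝ := volume.restrict (Set.Icc (-1) 1)
  let F (ρ : Measure E) (p : ℝ × E) : ℝ := ρ.real (sphericalCap p.2 p.1)
  have hμμ : Integrable (fun p => F μ p * F μ p) (T.prod σ) :=
    integrable_measureReal_sphericalCap_mul
  have hμσ : Integrable (fun p => 2 * (F μ p * F σ p)) (T.prod σ) :=
    integrable_measureReal_sphericalCap_mul.const_mul 2
  have hσσ : Integrable (fun p => F σ p * F σ p) (T.prod σ) :=
    integrable_measureReal_sphericalCap_mul
  have hdiff : Integrable (fun p => F μ p * F μ p - 2 * (F μ p * F σ p)) (T.prod σ) := hμμ.sub hμσ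
  have hexpand (p : ℝ × E) :
      (F μ p - F σ p) ^ 2 = F μ p * F μ p - 2 * (F μ p * F σ p) + F σ p * F σ p := by
    ring
  have hsq : Integrable (fun p => (F μ p - F σ p) ^ 2) (T.prod σ) := by
    simp only [hexpand]
    exact hdiff.add hσσ
  calc capL2DiscSq σ μ = ∫ p, (F μ p - F σ p) ^ 2 ∂T.prod σ := (integral_prod _ hsq).symm
    _ = (∫ p, F μ p * F μ p ∂T.prod σ) - 2 * (∫ p, F μ p * F σ p ∂T.prod σ) +
          ∫ p, F σ p * F σ p ∂T.prod σ := by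
        simp only [hexpand]
        rw [integral_add hdiff hσσ, integral_sub hμμ hμσ, integral_const_mul]
    _ = meanAbsInner σ / 2 * (meanDist σ σ - meanDist μ μ) := by
        rw [integral_prod_measureReal_sphericalCap_mul hμ hμ,
          integral_prod_measureReal_sphericalCap_mul hμ hσ,
          integral_prod_measureReal_sphericalCap_mul hσ hσ, meanDist_uniform_right_eq (σ := σ) hμ]
        ring

theorem sqrt_capL2DiscSq_le_iff (hμ : ∀ᵐ z ∂μ, ‖z‖ = 1) (hν : ∀ᵐ z ∂ν, ‖z‖ = 1) :
    √(capL2DiscSq σ μ) ≤ √(capL2DiscSq σ ν) ↔ meanDist ν ν ≤ meanDist μ μ := by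
  have hnonneg : 0 ≤ capL2DiscSq σ ν :=
    integral_nonneg fun _ => integral_nonneg fun _ => sq_nonneg _
  rw [sqrt_le_sqrt_iff hnonneg, capL2DiscSq_eq_meanDist_sub hμ, capL2DiscSq_eq_meanDist_sub hν,
    mul_le_mul_iff_right₀ (half_pos meanAbsInner_pos), sub_le_sub_iff_left]

end Stolarsky

section Empirical

variable {ι E : Type*} [Fintype ι] [MeasurableSpace E]

/-- The uniform distribution on the points of the configuration `x`, counted with multiplicity. -/
def empiricalMeasure (x : ι → E) : Measure E :=
  (Fintype.card ι : ℝ≥0∞)⁻¹ • ∑ k, Measure.dirac (x k)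

instance isProbabilityMeasure_empiricalMeasure [Nonempty ι] (x : ι → E) :
    IsProbabilityMeasure (empiricalMeasure x) where
  measure_univ := by
    simp [empiricalMeasure, ENNReal.inv_mul_cancel]

lemma measureReal_empiricalMeasure (x : ι → E) {s : Set E} (hs : MeasurableSet s) :
    (empiricalMeasure x).real s = Nat.card {k // x k ∈ s} / Fintype.card ι := by
  classical
  have hdirac (k : ι) : Measure.dirac (x k) s = if x k ∈ s then 1 else 0 :=
    Measure.dirac_apply' _ hs
  simp [empiricalMeasure, measureReal_def, hdirac, Finset.sum_boole, Fintype.card_subtype,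
    div_eq_inv_mul]

variable [MeasurableSingletonClass E]

lemma ae_empiricalMeasure {x : ι → E} {p : E → Prop} (h : ∀ k, p (x k)) :
    ∀ᵐ z ∂empiricalMeasure x, p z := by
  refine Measure.ae_smul_measure ?_ _
  simp only [ae_finsetSum_measure_iff, ae_dirac_eq, Finset.mem_univ, forall_const,
    eventually_pure, h, implies_true]

lemma integral_empiricalMeasure (x : ι → E) (f : E → ℝ) :
    ∫ z, f z ∂empiricalMeasure x = (Fintype.card ι : ℝ)⁻¹ * ∑ k, f (x k) := by
  rw [empiricalMeasure, integral_smul_measure,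
    integral_finsetSum_measure fun k _ => integrable_dirac (by simp)]
  simp only [integral_dirac, ENNReal.toReal_inv, ENNReal.toReal_natCast, smul_eq_mul]

end Empirical

lemma meanDist_empiricalMeasure {ι E : Type*} [Fintype ι] [NormedAddCommGroup E]
    [MeasurableSpace E] [MeasurableSingletonClass E] (x : ι → E) :
    meanDist (empiricalMeasure x) (empiricalMeasure x) =
      (Fintype.card ι : ℝ)⁻¹ ^ 2 * ∑ j, ∑ k, dist (x j) (x k) := by
  simp only [meanDist, integral_empiricalMeasure]
  rw [← Finset.mul_sum, ← mul_assoc, sq]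

lemma L2Disc_eq_sqrt_capL2DiscSq (d N : ℕ) (x : Fin N → EuclideanSpace ℝ (Fin (d + 1))) :
    L2Disc d N x = √(capL2DiscSq (sigmaMeasure d) (empiricalMeasure x)) := by
  have hcap (y : EuclideanSpace ℝ (Fin (d + 1))) (t : ℝ) : MeasurableSet (sphericalCap y t) :=
    measurableSet_le (by fun_prop) (by fun_prop)
  simp only [L2Disc, L2DiscSq, capL2DiscSq, measureReal_empiricalMeasure x (hcap _ _),
    Fintype.card_fin]
  rfl

theorem minimal_L2Disc_iff_maximal_sum_of_distances_general {E : Type*}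
    [NormedAddCommGroup E] [InnerProductSpace ℝ E] [FiniteDimensional ℝ E] [MeasurableSpace E]
    [BorelSpace E] {σ : Measure E} [IsUniformOnSphere σ] {ι : Type*} [Fintype ι] [Nonempty ι]
    {x : ι → E} (hx : ∀ k, x k ∈ sphere (0 : E) 1) :
    (∀ y : ι → E, (∀ k, y k ∈ sphere (0 : E) 1) →
        √(capL2DiscSq σ (empiricalMeasure x)) ≤ √(capL2DiscSq σ (empiricalMeasure y))) ↔
      (∀ y : ι → E, (∀ k, y k ∈ sphere (0 : E) 1) →
        ∑ j, ∑ k, dist (y j) (y k) ≤ ∑ j, ∑ k, dist (x j) (x k)) := by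
  simp only [mem_sphere_zero_iff_norm] at hx ⊢
  refine forall₂_congr fun y hy => ?_
  rw [sqrt_capL2DiscSq_le_iff (ae_empiricalMeasure hx) (ae_empiricalMeasure hy),
    meanDist_empiricalMeasure, meanDist_empiricalMeasure, mul_le_mul_iff_right₀ (by positivity)]

/-- An `N`-point configuration on `S^d` (`d ≥ 2`) has minimal spherical cap `L²`-discrepancy
among all `N`-point configurations on `S^d` if and only if it has maximal sum of pairwise
Euclidean distances among all `N`-point configurations on `S^d`. -/
theorem minimal_L2Disc_iff_maximal_sum_of_distances (d : ℕ) (hd : 2 ≤ d) (N : ℕ) (hN : 0 < N)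
    (x : Fin N → EuclideanSpace ℝ (Fin (d + 1)))
    (hx : ∀ k, x k ∈ sphere (0 : EuclideanSpace ℝ (Fin (d + 1))) 1) :
    (∀ y : Fin N → EuclideanSpace ℝ (Fin (d + 1)),
        (∀ k, y k ∈ sphere (0 : EuclideanSpace ℝ (Fin (d + 1))) 1) →
        L2Disc d N x ≤ L2Disc d N y) ↔
      (∀ y : Fin N → EuclideanSpace ℝ (Fin (d + 1)),
        (∀ k, y k ∈ sphere (0 : EuclideanSpace ℝ (Fin (d + 1))) 1) →
        ∑ j, ∑ k, dist (y j) (y k) ≤ ∑ j, ∑ k, dist (x j) (x k)) := by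
  have : Nonempty (Fin N) := ⟨⟨0, hN⟩⟩
  simpa only [L2Disc_eq_sqrt_capL2DiscSq] using
    minimal_L2Disc_iff_maximal_sum_of_distances_general hx
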